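/- Let p ≥ 7 be an odd integer and let c ≥ b₀. Let u : [0,1) → ℝ be real-analytic at ρ = 0 with u(0) = c and u'(0) = 0, and satisfy the self-similar profile equation (1−ρ²)u''(ρ) + (2/ρ − (2+2α)ρ)u'(ρ) − α(α+1)u(ρ) + u(ρ)^p = 0 for all ρ ∈ (0,1). Then for all ρ ∈ (0,1): √(1−ρ²)·|u'(ρ)| ≤ c^{(p+1)/2} and |u(ρ)| ≤ c. Moreover u(ρ) converges to a finite limit as ρ → 1⁻. -/

import Mathlib

open Set Real Filter

/-- The exponent `α = 2/(p-1)`. -/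
noncomputable def alphaP (p : ℕ) : ℝ := 2 / ((p : ℝ) - 1)

/-- `b₀ = (2(p+1)/(p-1)²)^(1/(p-1))`, the constant solution. -/
noncomputable def bZero (p : ℕ) : ℝ :=
  (2 * ((p : ℝ) + 1) / ((p : ℝ) - 1) ^ 2) ^ ((1 : ℝ) / ((p : ℝ) - 1))

/-- `b∞ = (2(p-3)/(p-1)²)^(1/(p-1))`. -/
noncomputable def bInfty (p : ℕ) : ℝ :=
  (2 * ((p : ℝ) - 3) / ((p : ℝ) - 1) ^ 2) ^ ((1 : ℝ) / ((p : ℝ) - 1))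

/-- The singular static solution `u∞(ρ) = b∞ ρ^(-α)`. -/
noncomputable def uInfty (p : ℕ) (ρ : ℝ) : ℝ := bInfty p * ρ ^ (-(alphaP p))

/-- The self-similar profile equation
`(1-ρ²)u'' + (2/ρ - (2+2α)ρ)u' - α(α+1)u + u^p = 0` at the point `ρ`. -/
def ProfileEq (p : ℕ) (u : ℝ → ℝ) (ρ : ℝ) : Prop :=
  (1 - ρ ^ 2) * deriv (deriv u) ρ + (2 / ρ - (2 + 2 * alphaP p) * ρ) * deriv u ρ
    - alphaP p * (alphaP p + 1) * u ρ + u ρ ^ p = 0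

/-!
Write `V(x) = x^(p+1)/(p+1) - α(α+1)x²/2`. Along a solution the energy `(1-ρ²)u'²/2 + V(u)` has
derivative `-(2/ρ - (1+2α)ρ)u'²`, which is nonpositive on `(0,1)` as soon as `α ≤ 1/2`; hence the
energy stays below its limit `V(c)` at `ρ = 0`. Since `V'(x) = x(x^(p-1) - b₀^(p-1))`, the even
function `V` is strictly increasing on `[b₀,∞)`, so `V(u) ≤ V(c)` forces `|u| ≤ c`, and the energy
inequality then bounds `√(1-ρ²)|u'|`. Consequently `|u'|` is dominated by a multiple of the
derivative of `arcsin`, which converges at `1`.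
-/

section DominatedDerivative

variable {E : Type*} [NormedAddCommGroup E] [NormedSpace ℝ E] {f f' : ℝ → E} {g g' : ℝ → ℝ}

lemma norm_sub_le_sub_of_norm_deriv_le {x y : ℝ} (hxy : x ≤ y)
    (hf : ∀ t ∈ Icc x y, HasDerivAt f (f' t) t) (hg : ∀ t ∈ Icc x y, HasDerivAt g (g' t) t)
    (hle : ∀ t ∈ Icc x y, ‖f' t‖ ≤ g' t) : ‖f y - f x‖ ≤ g y - g x :=
  image_norm_le_of_norm_deriv_right_le_deriv_boundary'
    (f := fun t ↦ f t - f x) (B := fun t ↦ g t - g x)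
    (fun t ht ↦ ((hf t ht).sub_const _).continuousAt.continuousWithinAt)
    (fun t ht ↦ ((hf t (Ico_subset_Icc_self ht)).sub_const _).hasDerivWithinAt)
    (by simp)
    (fun t ht ↦ ((hg t ht).sub_const _).continuousAt.continuousWithinAt)
    (fun t ht ↦ ((hg t (Ico_subset_Icc_self ht)).sub_const _).hasDerivWithinAt)
    (fun t ht ↦ hle t (Ico_subset_Icc_self ht)) (right_mem_Icc.2 hxy)

lemma dist_le_dist_of_norm_deriv_le {s : Set ℝ} [s.OrdConnected]
    (hf : ∀ t ∈ s, HasDerivAt f (f' t) t) (hg : ∀ t ∈ s, HasDerivAt g (g' t) t)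
    (hle : ∀ t ∈ s, ‖f' t‖ ≤ g' t) {x y : ℝ} (hx : x ∈ s) (hy : y ∈ s) :
    dist (f x) (f y) ≤ dist (g x) (g y) := by
  wlog hxy : x ≤ y generalizing x y
  · simpa only [dist_comm] using this hy hx (le_of_not_ge hxy)
  have hsub : Icc x y ⊆ s := Set.Icc_subset s hx hy
  rw [dist_comm (f x), dist_comm (g x), dist_eq_norm, Real.dist_eq]
  exact (norm_sub_le_sub_of_norm_deriv_le hxy (fun t ht ↦ hf t (hsub ht))
    (fun t ht ↦ hg t (hsub ht)) fun t ht ↦ hle t (hsub ht)).trans (le_abs_self _)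

lemma exists_tendsto_nhdsLT_of_norm_deriv_le [CompleteSpace E] {a b l : ℝ} (hab : a < b)
    (hf : ∀ t ∈ Ioo a b, HasDerivAt f (f' t) t) (hg : ∀ t ∈ Ioo a b, HasDerivAt g (g' t) t)
    (hle : ∀ t ∈ Ioo a b, ‖f' t‖ ≤ g' t) (hgl : Tendsto g (nhdsWithin b (Iio b)) (nhds l)) :
    ∃ L, Tendsto f (nhdsWithin b (Iio b)) (nhds L) := by
  have hg_cauchy := tendsto_uniformity_iff_dist_tendsto_zero.1 (cauchy_map_iff'.1 hgl.cauchy_map)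
  have hIoo : Ioo a b ∈ nhdsWithin b (Iio b) := Ioo_mem_nhdsLT hab
  refine cauchy_map_iff_exists_tendsto.1
    (cauchy_map_iff'.2 (tendsto_uniformity_iff_dist_tendsto_zero.2 ?_))
  refine squeeze_zero' (Eventually.of_forall fun _ ↦ dist_nonneg) ?_ hg_cauchy
  filter_upwards [prod_mem_prod hIoo hIoo] with q hq
  exact dist_le_dist_of_norm_deriv_le hf hg hle hq.1 hq.2

lemma exists_tendsto_nhdsLT_one_of_sqrt_mul_norm_deriv_le [CompleteSpace E] {a C : ℝ}
    (ha : a ∈ Ico (-1) 1) (hf : ∀ t ∈ Ioo a 1, HasDerivAt f (f' t) t)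
    (hle : ∀ t ∈ Ioo a 1, √(1 - t ^ 2) * ‖f' t‖ ≤ C) :
    ∃ L, Tendsto f (nhdsWithin 1 (Iio 1)) (nhds L) := by
  refine exists_tendsto_nhdsLT_of_norm_deriv_le ha.2 hf
    (g := fun t ↦ C * arcsin t) (g' := fun t ↦ C * (1 / √(1 - t ^ 2)))
    (fun t ht ↦ (hasDerivAt_arcsin (ha.1.trans_lt ht.1).ne' ht.2.ne).const_mul C) (fun t ht ↦ ?_)
    (((continuous_arcsin.const_mul C).tendsto 1).mono_left nhdsWithin_le_nhds)
  have hsqrt : 0 < √(1 - t ^ 2) := Real.sqrt_pos.2 (by nlinarith [ha.1, ht.1, ht.2])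
  rw [mul_one_div, le_div_iff₀ hsqrt, mul_comm]
  exact hle t ht

end DominatedDerivative

section Constants

variable {p : ℕ}

lemma alphaP_le_half (hp : 5 ≤ p) : alphaP p ≤ 1 / 2 := by
  have hp' : (5 : ℝ) ≤ p := by exact_mod_cast hp
  rw [alphaP, div_le_div_iff₀ (by linarith) two_pos]
  linarith

lemma alphaP_mul_alphaP_add_one (hp : p ≠ 1) :
    alphaP p * (alphaP p + 1) = 2 * ((p : ℝ) + 1) / ((p : ℝ) - 1) ^ 2 := by
  have hp' : (p : ℝ) - 1 ≠ 0 := sub_ne_zero.2 (by exact_mod_cast hp)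
  rw [alphaP]
  field_simp
  ring

lemma alphaP_mul_alphaP_add_one_pos (hp : 1 < p) : 0 < alphaP p * (alphaP p + 1) := by
  have hp' : (0 : ℝ) < p - 1 := sub_pos.2 (by exact_mod_cast hp)
  rw [alphaP_mul_alphaP_add_one hp.ne']
  positivity

lemma bZero_pos (hp : 1 < p) : 0 < bZero p :=
  rpow_pos_of_pos (alphaP_mul_alphaP_add_one hp.ne' ▸ alphaP_mul_alphaP_add_one_pos hp) _

lemma bZero_pow_pred (hp : 1 < p) : bZero p ^ (p - 1) = alphaP p * (alphaP p + 1) := by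
  rw [bZero, ← alphaP_mul_alphaP_add_one hp.ne', one_div, ← Nat.cast_pred (by lia : 0 < p),
    rpow_inv_natCast_pow (alphaP_mul_alphaP_add_one_pos hp).le (by lia)]

end Constants

/-- The potential `V(x) = x^(p+1)/(p+1) - α(α+1)x²/2`, whose derivative is the zeroth-order part
`x^p - α(α+1)x` of the profile equation. -/
noncomputable def profilePotential (p : ℕ) (x : ℝ) : ℝ :=
  x ^ (p + 1) / ((p : ℝ) + 1) - alphaP p * (alphaP p + 1) * x ^ 2 / 2

section Potential

variable {p : ℕ} {c x : ℝ}

lemma hasDerivAt_profilePotential (p : ℕ) (x : ℝ) :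
    HasDerivAt (profilePotential p) (x ^ p - alphaP p * (alphaP p + 1) * x) x := by
  refine (((hasDerivAt_pow (p + 1) x).div_const ((p : ℝ) + 1)).sub
    (((hasDerivAt_pow 2 x).const_mul (alphaP p * (alphaP p + 1))).div_const 2)).congr_deriv ?_
  have hp : (p : ℝ) + 1 ≠ 0 := by positivity
  push_cast
  field_simp

lemma continuous_profilePotential (p : ℕ) : Continuous (profilePotential p) :=
  continuous_iff_continuousAt.2 fun x ↦ (hasDerivAt_profilePotential p x).continuousAt

lemma profilePotential_abs (hp : Odd p) (x : ℝ) :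
    profilePotential p |x| = profilePotential p x := by
  rw [profilePotential, profilePotential, hp.add_one.pow_abs, sq_abs]

lemma strictMonoOn_profilePotential (hp : 1 < p) :
    StrictMonoOn (profilePotential p) (Ici (bZero p)) := by
  refine strictMonoOn_of_deriv_pos (convex_Ici _) (continuous_profilePotential p).continuousOn
    fun x hx ↦ ?_
  rw [interior_Ici, mem_Ioi] at hx
  have hx_pos : 0 < x := (bZero_pos hp).trans hx
  have hpow : bZero p ^ (p - 1) < x ^ (p - 1) := pow_lt_pow_left₀ hx (bZero_pos hp).le (by lia)
  calc
    0 < (x ^ (p - 1) - bZero p ^ (p - 1)) * x := mul_pos (sub_pos.2 hpow) hx_pos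
    _ = x ^ p - alphaP p * (alphaP p + 1) * x := by
      rw [sub_mul, pow_sub_one_mul (by lia), bZero_pow_pred hp]
    _ = deriv (profilePotential p) x := (hasDerivAt_profilePotential p x).deriv.symm

lemma abs_le_of_profilePotential_le (hp_odd : Odd p) (hp : 1 < p) (hc : bZero p ≤ c)
    (h : profilePotential p x ≤ profilePotential p c) : |x| ≤ c := by
  by_contra! hlt
  rw [← profilePotential_abs hp_odd] at h
  exact h.not_gt (strictMonoOn_profilePotential hp hc (hc.trans hlt.le) hlt)

lemma profilePotential_sub_le (hp_odd : Odd p) (hp : 1 < p) (hx : |x| ≤ c) :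
    profilePotential p c - profilePotential p x ≤ c ^ (p + 1) / ((p : ℝ) + 1) := by
  have hsq : alphaP p * (alphaP p + 1) * x ^ 2 ≤ alphaP p * (alphaP p + 1) * c ^ 2 :=
    mul_le_mul_of_nonneg_left (sq_le_sq' (abs_le.1 hx).1 (abs_le.1 hx).2)
      (alphaP_mul_alphaP_add_one_pos hp).le
  have hpow : 0 ≤ x ^ (p + 1) / ((p : ℝ) + 1) :=
    div_nonneg (hp_odd.add_one.pow_nonneg x) (by positivity)
  rw [profilePotential, profilePotential]
  linarith

end Potential

/-- The Lyapunov function `H(ρ) = (1-ρ²)u'(ρ)²/2 + V(u(ρ))` of the profile equation, where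
`V = profilePotential p`. -/
noncomputable def profileEnergy (p : ℕ) (u : ℝ → ℝ) (ρ : ℝ) : ℝ :=
  (1 - ρ ^ 2) * deriv u ρ ^ 2 / 2 + profilePotential p (u ρ)

section Energy

variable {p : ℕ} {c ρ : ℝ} {u : ℝ → ℝ}

lemma hasDerivAt_profileEnergy (hdiff : DifferentiableAt ℝ u ρ)
    (hdiff2 : DifferentiableAt ℝ (deriv u) ρ) (heq : ProfileEq p u ρ) :
    HasDerivAt (profileEnergy p u) (-((2 / ρ - (1 + 2 * alphaP p) * ρ) * deriv u ρ ^ 2)) ρ := by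
  have hkin : HasDerivAt (fun r ↦ (1 - r ^ 2) * deriv u r ^ 2 / 2)
      (-ρ * deriv u ρ ^ 2 + (1 - ρ ^ 2) * deriv u ρ * deriv (deriv u) ρ) ρ := by
    refine ((((hasDerivAt_pow 2 ρ).const_sub 1).mul
      (hdiff2.hasDerivAt.pow 2)).div_const 2).congr_deriv ?_
    simp only [Pi.pow_apply]
    push_cast
    ring
  refine (hkin.add ((hasDerivAt_profilePotential p (u ρ)).comp ρ hdiff.hasDerivAt)).congr_deriv ?_
  rw [ProfileEq] at heq
  linear_combination deriv u ρ * heq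

lemma two_div_sub_mul_nonneg (hp : 5 ≤ p) (hρ : ρ ∈ Ioo (0 : ℝ) 1) :
    0 ≤ 2 / ρ - (1 + 2 * alphaP p) * ρ := by
  have hα : (1 + 2 * alphaP p) * ρ ≤ 2 * ρ :=
    mul_le_mul_of_nonneg_right (by linarith [alphaP_le_half hp]) hρ.1.le
  have hinv : 2 ≤ 2 / ρ := (le_div_iff₀ hρ.1).2 (by linarith [hρ.2])
  linarith [hρ.2]

lemma antitoneOn_profileEnergy (hp : 5 ≤ p)
    (hdiff : ∀ ρ ∈ Ioo (0 : ℝ) 1, DifferentiableAt ℝ u ρ)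
    (hdiff2 : ∀ ρ ∈ Ioo (0 : ℝ) 1, DifferentiableAt ℝ (deriv u) ρ)
    (heq : ∀ ρ ∈ Ioo (0 : ℝ) 1, ProfileEq p u ρ) :
    AntitoneOn (profileEnergy p u) (Ioo 0 1) := by
  have hderiv := fun ρ hρ ↦ hasDerivAt_profileEnergy (hdiff ρ hρ) (hdiff2 ρ hρ) (heq ρ hρ)
  refine antitoneOn_of_hasDerivWithinAt_nonpos (convex_Ioo 0 1)
    (fun ρ hρ ↦ (hderiv ρ hρ).continuousAt.continuousWithinAt)
    (fun ρ hρ ↦ (hderiv ρ (interior_subset hρ)).hasDerivWithinAt) fun ρ hρ ↦ ?_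
  exact neg_nonpos.2
    (mul_nonneg (two_div_sub_mul_nonneg hp (interior_subset hρ)) (sq_nonneg _))

lemma tendsto_profileEnergy_zero (p : ℕ) (hu : Tendsto u (nhdsWithin 0 (Ioi 0)) (nhds c))
    (hu' : Tendsto (deriv u) (nhdsWithin 0 (Ioi 0)) (nhds 0)) :
    Tendsto (profileEnergy p u) (nhdsWithin 0 (Ioi 0)) (nhds (profilePotential p c)) := by
  have hid : Tendsto (fun ρ : ℝ ↦ ρ) (nhdsWithin 0 (Ioi 0)) (nhds 0) := nhdsWithin_le_nhds
  have hkin : Tendsto (fun ρ ↦ (1 - ρ ^ 2) * deriv u ρ ^ 2 / 2)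
      (nhdsWithin 0 (Ioi 0)) (nhds 0) := by
    simpa using (((hid.pow 2).const_sub 1).mul (hu'.pow 2)).div_const 2
  rw [← zero_add (profilePotential p c)]
  exact hkin.add (((continuous_profilePotential p).tendsto c).comp hu)

lemma profileEnergy_le_profilePotential (hp : 5 ≤ p)
    (hu : Tendsto u (nhdsWithin 0 (Ioi 0)) (nhds c))
    (hu' : Tendsto (deriv u) (nhdsWithin 0 (Ioi 0)) (nhds 0))
    (hdiff : ∀ ρ ∈ Ioo (0 : ℝ) 1, DifferentiableAt ℝ u ρ)
    (hdiff2 : ∀ ρ ∈ Ioo (0 : ℝ) 1, DifferentiableAt ℝ (deriv u) ρ)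
    (heq : ∀ ρ ∈ Ioo (0 : ℝ) 1, ProfileEq p u ρ) (hρ : ρ ∈ Ioo (0 : ℝ) 1) :
    profileEnergy p u ρ ≤ profilePotential p c := by
  refine ge_of_tendsto (tendsto_profileEnergy_zero p hu hu') ?_
  filter_upwards [Ioo_mem_nhdsGT hρ.1] with r hr
  exact antitoneOn_profileEnergy hp hdiff hdiff2 heq ⟨hr.1, hr.2.trans hρ.2⟩ hρ hr.2.le

lemma abs_le_of_profileEnergy_le (hp_odd : Odd p) (hp : 1 < p) (hc : bZero p ≤ c)
    (hρ : ρ ^ 2 ≤ 1) (h : profileEnergy p u ρ ≤ profilePotential p c) : |u ρ| ≤ c := by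
  have hkin : 0 ≤ (1 - ρ ^ 2) * deriv u ρ ^ 2 / 2 :=
    div_nonneg (mul_nonneg (sub_nonneg.2 hρ) (sq_nonneg _)) zero_le_two
  exact abs_le_of_profilePotential_le hp_odd hp hc ((le_add_of_nonneg_left hkin).trans h)

lemma sqrt_mul_abs_deriv_le_of_profileEnergy_le (hp_odd : Odd p) (hp : 1 < p) (hρ : ρ ^ 2 ≤ 1)
    (hu : |u ρ| ≤ c) (h : profileEnergy p u ρ ≤ profilePotential p c) :
    √(1 - ρ ^ 2) * |deriv u ρ| ≤ c ^ (((p : ℝ) + 1) / 2) := by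
  have hc : 0 ≤ c := (abs_nonneg _).trans hu
  have hkin : (1 - ρ ^ 2) * deriv u ρ ^ 2 / 2 ≤ c ^ (p + 1) / ((p : ℝ) + 1) :=
    (le_sub_iff_add_le.2 h).trans (profilePotential_sub_le hp_odd hp hu)
  have hhalf : c ^ (p + 1) / ((p : ℝ) + 1) ≤ c ^ (p + 1) / 2 := by
    have : (1 : ℝ) < p := by exact_mod_cast hp
    gcongr
    linarith
  refine le_of_sq_le_sq ?_ (rpow_nonneg hc _)
  calc
    (√(1 - ρ ^ 2) * |deriv u ρ|) ^ 2 = (1 - ρ ^ 2) * deriv u ρ ^ 2 := by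
      rw [mul_pow, Real.sq_sqrt (sub_nonneg.2 hρ), sq_abs]
    _ ≤ c ^ (p + 1) := by linarith
    _ = (c ^ (((p : ℝ) + 1) / 2)) ^ 2 := by
      rw [← rpow_mul_natCast hc, Nat.cast_two, div_mul_cancel₀ _ two_ne_zero, ← Nat.cast_succ,
        rpow_natCast]

end Energy

theorem bounds_for_regular_solutions_general (p : ℕ) (hp_odd : Odd p) (hp : 5 ≤ p)
    (c : ℝ) (hc : bZero p ≤ c)
    (u : ℝ → ℝ) (hu : Tendsto u (nhdsWithin 0 (Ioi 0)) (nhds c))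
    (hu' : Tendsto (deriv u) (nhdsWithin 0 (Ioi 0)) (nhds 0))
    (hdiff : ∀ ρ ∈ Ioo (0 : ℝ) 1, DifferentiableAt ℝ u ρ)
    (hdiff2 : ∀ ρ ∈ Ioo (0 : ℝ) 1, DifferentiableAt ℝ (deriv u) ρ)
    (heq : ∀ ρ ∈ Ioo (0 : ℝ) 1, ProfileEq p u ρ) :
    (∀ ρ ∈ Ioo (0 : ℝ) 1,
      √(1 - ρ ^ 2) * |deriv u ρ| ≤ c ^ (((p : ℝ) + 1) / 2) ∧ |u ρ| ≤ c) ∧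
    ∃ L : ℝ, Tendsto u (nhdsWithin 1 (Iio 1)) (nhds L) := by
  have hp_gt : 1 < p := by lia
  have hbounds : ∀ ρ ∈ Ioo (0 : ℝ) 1,
      √(1 - ρ ^ 2) * |deriv u ρ| ≤ c ^ (((p : ℝ) + 1) / 2) ∧ |u ρ| ≤ c := by
    intro ρ hρ
    have hρ_sq : ρ ^ 2 ≤ 1 := pow_le_one₀ hρ.1.le hρ.2.le
    have henergy := profileEnergy_le_profilePotential hp hu hu' hdiff hdiff2 heq hρ
    have hu_le := abs_le_of_profileEnergy_le hp_odd hp_gt hc hρ_sq henergy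
    exact ⟨sqrt_mul_abs_deriv_le_of_profileEnergy_le hp_odd hp_gt hρ_sq hu_le henergy, hu_le⟩
  exact ⟨hbounds, exists_tendsto_nhdsLT_one_of_sqrt_mul_norm_deriv_le
    ⟨by norm_num, zero_lt_one⟩ (fun ρ hρ ↦ (hdiff ρ hρ).hasDerivAt) fun ρ hρ ↦ (hbounds ρ hρ).1⟩

/-- For a solution regular at `ρ = 0` with `u(0) = c ≥ b₀`,
`u'(0) = 0`: `√(1-ρ²)|u'| ≤ c^((p+1)/2)` and `|u| ≤ c` on `(0,1)`, and `u` has a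
finite limit as `ρ → 1⁻`. -/
theorem bounds_for_regular_solutions (p : ℕ) (hp_odd : Odd p) (hp : 7 ≤ p)
    (c : ℝ) (hc : bZero p ≤ c)
    (u : ℝ → ℝ) (hu : AnalyticAt ℝ u 0) (hu0 : u 0 = c) (hd0 : deriv u 0 = 0)
    (hdiff : ∀ ρ ∈ Ioo (0 : ℝ) 1, DifferentiableAt ℝ u ρ)
    (hdiff2 : ∀ ρ ∈ Ioo (0 : ℝ) 1, DifferentiableAt ℝ (deriv u) ρ)
    (heq : ∀ ρ ∈ Ioo (0 : ℝ) 1, ProfileEq p u ρ) :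
    (∀ ρ ∈ Ioo (0 : ℝ) 1,
      Real.sqrt (1 - ρ ^ 2) * |deriv u ρ| ≤ c ^ (((p : ℝ) + 1) / 2) ∧ |u ρ| ≤ c) ∧
    ∃ L : ℝ, Tendsto u (nhdsWithin 1 (Iio 1)) (nhds L) := by
  exact bounds_for_regular_solutions_general p hp_odd (by lia) c hc u
    (hu0 ▸ hu.continuousAt.tendsto.mono_left nhdsWithin_le_nhds)
    (by simpa only [hd0] using hu.deriv.continuousAt.tendsto.mono_left nhdsWithin_le_nhds)
    hdiff hdiff2 heq
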